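/- Let U ⊆ ℂ^n be a nonempty connected open set and let f : U → ℂ be a function (no continuity or holomorphy assumed). Assume that for every index i, every point a ∈ U, every connected open set A ⊆ {z ∈ ℂ : a(i↦z) ∈ U} that is homeomorphic to the open unit disc, and every z₀ ∈ A, there exist one-variable complex polynomials p, q with q(z₀) ≠ 0 such that f(a(i↦z)) = p(z)/q(z) for every z ∈ A with q(z) ≠ 0; here a(i↦z) denotes the point obtained from a by replacing its i-th coordinate by z. Then f is regular on U. (Theorem 9.2 in the case where every factor is the affine line.) -/

import Mathlib

open MvPolynomial

/-!
The first step is local. On a product of open sets, induct on the number of variables: with the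
first coordinate fixed at `t`, the function `f` is a fraction `a_t / b_t` of polynomials in the
other coordinates `s`; with `s` fixed, it is a rational function of `t`. By Baire, the degree of
the latter is bounded on a Zariski dense set of `s`. There a linear system with coefficients
`t ^ k * a_t` and `t ^ k * b_t` has a nonzero solution, so all its minors vanish, hence vanish as
polynomials in `s`, and the system has a nonzero polynomial solution: `Q * f = P` with `Q ≠ 0`.

Separate continuity allows a common factor of `P` and `Q` to be cancelled, and then `Q` has no
zero. Indeed, roots of `Q` on a line persist on nearby parallel lines; as `P` vanishes at them too,
so does a nonzero combination of `P` and `Q` free of the variable along the line, which is absurd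
on an open set. Hence `Q` vanishes on every coordinate line through a zero, so `Q = 0`.

Finally, two coprime fractions which agree on a nonempty open set are the same, so over a connected
set the local fractions glue.
-/

open Metric
open scoped Matrix Polynomial Topology

section LinearAlgebra

theorem exists_det_submatrix_ne_zero {F ι m : Type*} [Field F] [Fintype m] [DecidableEq m]
    {W : Matrix ι m F} (hW : LinearIndependent F W.col) :
    ∃ t : m → ι, (W.submatrix t id).det ≠ 0 := by
  have rows_span : Submodule.span F (Set.range W.row) = ⊤ := by
    by_contra hne
    obtain ⟨φ, hφ, hle⟩ := Submodule.exists_le_ker_of_lt_top _ (lt_top_iff_ne_top.2 hne)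
    refine hφ (LinearMap.pi_ext' fun j => LinearMap.ext_ring ?_)
    refine Fintype.linearIndependent_iff.1 hW (fun k => φ (Pi.single k 1)) (funext fun i => ?_) j
    have hrow : φ (W.row i) = 0 := hle (Submodule.subset_span ⟨i, rfl⟩)
    simpa [φ.pi_apply_eq_sum_univ (W.row i), ← Pi.single_apply, Pi.single_comm, mul_comm]
      using hrow
  obtain ⟨b, hb, -, hli⟩ := Submodule.exists_fun_fin_finrank_span_eq F (Set.range W.row)
  choose s hs using hb
  have hcard : Module.finrank F (Submodule.span F (Set.range W.row)) = Fintype.card m := by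
    rw [rows_span, finrank_top, Module.finrank_fintype_fun_eq_card]
  let e : m ≃ Fin _ := Fintype.equivFinOfCardEq hcard.symm
  refine ⟨s ∘ e, ((Matrix.isUnit_iff_isUnit_det _).1 ?_).ne_zero⟩
  rw [← Matrix.linearIndependent_rows_iff_isUnit]
  have hrows : (W.submatrix (s ∘ e) id).row = b ∘ e := funext fun j => hs (e j)
  exact hrows ▸ hli.comp e e.injective

theorem not_linearIndependent_col_of_forall_det_eq_zero {R ι m : Type*} [CommRing R] [IsDomain R]
    [Fintype m] [DecidableEq m] {W : Matrix ι m R}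
    (hW : ∀ t : m → ι, (W.submatrix t id).det = 0) : ¬ LinearIndependent R W.col := by
  intro hli
  let F := FractionRing R
  have hliF : LinearIndependent F (W.map (algebraMap R F)).col := by
    rw [← LinearIndependent.iff_fractionRing R F]
    exact hli.map_injOn ((Algebra.linearMap R F).compLeft ι)
      ((FaithfulSMul.algebraMap_injective R F).comp_left.injOn)
  obtain ⟨t, ht⟩ := exists_det_submatrix_ne_zero hliF
  apply ht
  rw [Matrix.submatrix_map, ← RingHom.mapMatrix_apply, ← RingHom.map_det, hW t, map_zero]

end LinearAlgebra

section Elimination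

variable {R : Type*} [CommRing R] [IsDomain R] [UniqueFactorizationMonoid R]

theorem isCoprime_map_fractionRing_of_isRelPrime {p q : R[X]} (hpq : IsRelPrime p q) :
    IsCoprime (p.map (algebraMap R (FractionRing R))) (q.map (algebraMap R (FractionRing R))) := by
  let F := FractionRing R
  let _ : NormalizedGCDMonoid R := Classical.choice inferInstance
  rw [← isRelPrime_iff_isCoprime]
  intro d hdp hdq
  obtain rfl | hd := eq_or_ne d 0
  · rw [zero_dvd_iff, Polynomial.map_eq_zero_iff (FaithfulSMul.algebraMap_injective R F)] at hdp hdq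
    exact absurd (hpq hdp.symm.dvd hdq.symm.dvd) not_isUnit_zero
  · set d' := IsLocalization.integerNormalization (nonZeroDivisors R) d
    obtain ⟨c, hc, hcd⟩ := IsLocalization.integerNormalization_spec (nonZeroDivisors R) d
    have hunit : IsUnit (Polynomial.C (algebraMap R F c)) :=
      Polynomial.isUnit_C.2 (IsLocalization.map_units F ⟨c, hc⟩)
    have dvd_of_dvd_map {g : R[X]} (hdg : d ∣ g.map (algebraMap R F)) : d'.primPart ∣ g := by
      refine d'.isPrimitive_primPart.dvd_of_fraction_map_dvd_fraction_map (K := F) ?_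
      calc d'.primPart.map (algebraMap R F) ∣ d'.map (algebraMap R F) :=
            Polynomial.map_dvd _ d'.primPart_dvd
        _ = Polynomial.C (algebraMap R F c) * d := by
            rw [hcd, ← algebraMap_smul F c d, Polynomial.smul_eq_C_mul]
        _ ∣ g.map (algebraMap R F) := hunit.mul_left_dvd.2 hdg
    exact Polynomial.isUnit_or_eq_zero_of_isUnit_integerNormalization_primPart hd
      (hpq (dvd_of_dvd_map hdp) (dvd_of_dvd_map hdq))

theorem exists_mul_add_mul_eq_C_of_isRelPrime {p q : R[X]} (hpq : IsRelPrime p q) :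
    ∃ a b : R[X], ∃ r ≠ 0, a * p + b * q = Polynomial.C r := by
  let F := FractionRing R
  let _ := Polynomial.algebra R F
  have hloc := Polynomial.isLocalization (nonZeroDivisors R) F
  have htop : (Ideal.span {p, q}).map (algebraMap R[X] F[X]) = ⊤ := by
    rw [Ideal.map_span, Set.image_pair, Ideal.eq_top_iff_one, Ideal.mem_span_pair]
    exact isCoprime_map_fractionRing_of_isRelPrime hpq
  have hmeet := mt (IsLocalization.map_algebraMap_ne_top_iff_disjoint
    ((nonZeroDivisors R).map Polynomial.C) F[X] (Ideal.span {p, q})).2 (not_not.2 htop)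
  obtain ⟨_, ⟨r, hr, rfl⟩, hrI⟩ := Set.not_disjoint_iff.1 hmeet
  obtain ⟨a, b, hab⟩ := Ideal.mem_span_pair.1 hrI
  exact ⟨a, b, r, nonZeroDivisors.ne_zero hr, hab⟩

theorem exists_mul_add_mul_eq_rename_of_isRelPrime {σ : Type*} {p q : MvPolynomial σ R}
    (hpq : IsRelPrime p q) (i : σ) :
    ∃ a b : MvPolynomial σ R, ∃ r : MvPolynomial {j // j ≠ i} R, r ≠ 0 ∧
      a * p + b * q = rename Subtype.val r := by
  classical
  let e : MvPolynomial σ R ≃ₐ[R] (MvPolynomial {j // j ≠ i} R)[X] :=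
    (renameEquiv R (Equiv.optionSubtypeNe i).symm).trans (optionEquivLeft R _)
  have he : IsRelPrime (e p) (e q) := IsRelPrime.of_map e.symm (by simpa using hpq)
  obtain ⟨a, b, r, hr, hab⟩ := exists_mul_add_mul_eq_C_of_isRelPrime he
  refine ⟨e.symm a, e.symm b, r, hr, e.injective ?_⟩
  have hrename : (e : MvPolynomial σ R →ₐ[R] _).comp (rename (Subtype.val : {j // j ≠ i} → σ)) =
      IsScalarTower.toAlgHom R (MvPolynomial {j // j ≠ i} R) (MvPolynomial {j // j ≠ i} R)[X] := by
    ext j : 1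
    simp [e, Equiv.optionSubtypeNe_symm_of_ne j.2]
  simpa [hab] using (DFunLike.congr_fun hrename r).symm

end Elimination

section ZariskiDense

/-- Zariski density in affine space, in the form that no nonzero polynomial vanishes on `E`. -/
def IsZariskiDense {R σ : Type*} [CommSemiring R] (E : Set (σ → R)) : Prop :=
  ∀ h : MvPolynomial σ R, (∀ s ∈ E, eval s h = 0) → h = 0

theorem IsZariskiDense.exists_mulVec_eq_zero {R σ ι m : Type*} [CommRing R] [IsDomain R]
    [Fintype m] {E : Set (σ → R)} (hE : IsZariskiDense E) {W : Matrix ι m (MvPolynomial σ R)}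
    (hW : ∀ s ∈ E, ∃ v : m → R, v ≠ 0 ∧ W.map (eval s) *ᵥ v = 0) :
    ∃ u : m → MvPolynomial σ R, u ≠ 0 ∧ W *ᵥ u = 0 := by
  classical
  have hdet (t : m → ι) : (W.submatrix t id).det = 0 := by
    refine hE _ fun s hs => ?_
    obtain ⟨v, hv, hWv⟩ := hW s hs
    rw [RingHom.map_det]
    exact Matrix.exists_mulVec_eq_zero_iff.1 ⟨v, hv, funext fun j => congrFun hWv (t j)⟩
  have hdep := not_linearIndependent_col_of_forall_det_eq_zero hdet
  rw [Fintype.not_linearIndependent_iff] at hdep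
  obtain ⟨u, hu, j, hj⟩ := hdep
  refine ⟨u, Function.ne_iff.2 ⟨j, hj⟩, ?_⟩
  simp only [Matrix.mulVec_eq_sum, op_smul_eq_smul]
  exact hu

variable {K σ : Type*} [NontriviallyNormedField K] [Finite σ]

theorem isZariskiDense_of_isOpen {V : Set (σ → K)} (hV : IsOpen V) (hne : V.Nonempty) :
    IsZariskiDense V := by
  intro h h0
  cases nonempty_fintype σ
  obtain ⟨c, hc⟩ := hne
  obtain ⟨r, hr, hball⟩ := Metric.isOpen_iff.1 hV c hc
  refine funext_set (fun i => ball (c i) r)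
    (fun i => infinite_of_mem_nhds (c i) (ball_mem_nhds _ hr)) fun x hx => ?_
  rw [map_zero]
  exact h0 x (hball (by rwa [ball_pi _ hr]))

theorem exists_isZariskiDense_of_subset_iUnion [CompleteSpace K] {ι : Type*} [Countable ι]
    {V : Set (σ → K)} (hV : IsOpen V) (hne : V.Nonempty) {E : ι → Set (σ → K)}
    (hE : V ⊆ ⋃ d, E d) : ∃ d, IsZariskiDense (E d) := by
  cases nonempty_fintype σ
  unfold IsZariskiDense
  by_contra! hcon
  choose h hvanish h0 using hcon
  have hdense : Dense (⋂ d, {x | eval x (h d) ≠ 0}) := by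
    refine dense_iInter_of_isOpen (fun d => isOpen_ne_fun (continuous_eval _) continuous_const)
      fun d => dense_iff_inter_open.2 fun W hW hWne => ?_
    by_contra hempty
    exact h0 d (isZariskiDense_of_isOpen hW hWne _ fun x hx =>
      by_contra fun hx0 => hempty ⟨x, hx, hx0⟩)
  obtain ⟨x, hxV, hx⟩ := hdense.inter_open_nonempty V hV hne
  obtain ⟨d, hxd⟩ := Set.mem_iUnion.1 (hE hxV)
  exact Set.mem_iInter.1 hx d (hvanish d x hxd)

end ZariskiDense

section Interpolation

/-- The matrix of the linear system `q (x i) * a i = p (x i) * b i`, with one equation for each `i`,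
in the coefficients of two polynomials `q` and `p` of degree less than `d`, in this order. -/
def rationalInterpolationMatrix {R ι : Type*} [CommRing R] (d : ℕ) (x a b : ι → R) :
    Matrix ι (Fin d ⊕ Fin d) R :=
  Matrix.of fun i => Sum.elim (fun k => x i ^ (k : ℕ) * a i) fun k => -(x i ^ (k : ℕ) * b i)

theorem rationalInterpolationMatrix_mulVec {R ι : Type*} [CommRing R] [DecidableEq R] (d : ℕ)
    (x a b : ι → R) (u v : Fin d → R) :
    rationalInterpolationMatrix d x a b *ᵥ Sum.elim u v = fun i =>
      (Polynomial.ofFn d u).eval (x i) * a i - (Polynomial.ofFn d v).eval (x i) * b i := by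
  ext i
  simp only [rationalInterpolationMatrix, Matrix.mulVec, dotProduct, Matrix.of_apply,
    Fintype.sum_sum_type, Sum.elim_inl, Sum.elim_inr, Polynomial.ofFn_eq_sum_monomial,
    Polynomial.eval_finsetSum, Polynomial.eval_monomial, Finset.sum_mul, sub_eq_add_neg,
    ← Finset.sum_neg_distrib]
  congr 1 <;> exact Finset.sum_congr rfl fun k _ => by ring

theorem rationalInterpolationMatrix_map {R S ι : Type*} [CommRing R] [CommRing S] (φ : R →+* S)
    (d : ℕ) (x a b : ι → R) :
    (rationalInterpolationMatrix d x a b).map φ =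
      rationalInterpolationMatrix d (φ ∘ x) (φ ∘ a) (φ ∘ b) := by
  ext i (k | k) <;> simp [rationalInterpolationMatrix]

theorem ne_zero_of_forall_eval_mul_eq_eval_mul {R ι : Type*} [CommRing R] [IsDomain R] [Infinite ι]
    {x a b : ι → R} (hx : Function.Injective x) (hb : ∀ i, b i ≠ 0) {p q : R[X]}
    (hne : p ≠ 0 ∨ q ≠ 0) (hpq : ∀ i, q.eval (x i) * a i = p.eval (x i) * b i) : q ≠ 0 := by
  rintro rfl
  refine hne.elim (fun hp => hp (p.eq_zero_of_infinite_isRoot ?_)) fun h => h rfl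
  refine (Set.infinite_range_of_injective hx).mono ?_
  rintro _ ⟨i, rfl⟩
  have hroot : p.eval (x i) * b i = 0 := by simpa using (hpq i).symm
  exact (mul_eq_zero.1 hroot).resolve_right (hb i)

theorem IsZariskiDense.exists_eval_C_mul_eq {R σ ι : Type*} [CommRing R] [IsDomain R]
    {E : Set (σ → R)} (hE : IsZariskiDense E) {d : ℕ} {x : ι → R} {a b : ι → MvPolynomial σ R}
    (h : ∀ s ∈ E, ∃ p q : R[X], q ≠ 0 ∧ p.natDegree < d ∧ q.natDegree < d ∧
      ∀ i, q.eval (x i) * eval s (a i) = p.eval (x i) * eval s (b i)) :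
    ∃ p q : (MvPolynomial σ R)[X], (p ≠ 0 ∨ q ≠ 0) ∧
      ∀ i, q.eval (C (x i)) * a i = p.eval (C (x i)) * b i := by
  classical
  obtain ⟨u, hu, hWu⟩ := hE.exists_mulVec_eq_zero
      (W := rationalInterpolationMatrix d (C ∘ x) a b) fun s hs => by
    obtain ⟨p, q, hq, hpd, hqd, hpq⟩ := h s hs
    refine ⟨Sum.elim (Polynomial.toFn d q) (Polynomial.toFn d p), fun h0 => hq ?_, ?_⟩
    · have hq0 : Polynomial.toFn d q = 0 := funext fun k => congrFun h0 (Sum.inl k)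
      rw [← Polynomial.ofFn_comp_toFn_eq_id_of_natDegree_lt hqd, hq0, map_zero]
    · rw [rationalInterpolationMatrix_map, rationalInterpolationMatrix_mulVec,
        Polynomial.ofFn_comp_toFn_eq_id_of_natDegree_lt hpd,
        Polynomial.ofFn_comp_toFn_eq_id_of_natDegree_lt hqd]
      exact funext fun i => by simp [hpq i]
  rw [← Sum.elim_comp_inl_inr u, rationalInterpolationMatrix_mulVec] at hWu
  refine ⟨Polynomial.ofFn d (u ∘ Sum.inr), Polynomial.ofFn d (u ∘ Sum.inl), ?_,
    fun i => sub_eq_zero.1 (congrFun hWu i)⟩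
  by_contra! h0
  have eq_zero_of_ofFn (v : Fin d → MvPolynomial σ R) (hv : Polynomial.ofFn d v = 0) : v = 0 :=
    Polynomial.injective_ofFn d (hv.trans (map_zero _).symm)
  refine hu (funext (Sum.rec (fun k => ?_) fun k => ?_))
  · exact congrFun (eq_zero_of_ofFn _ h0.2) k
  · exact congrFun (eq_zero_of_ofFn _ h0.1) k

end Interpolation

section LineRestriction

variable {R σ : Type*} [CommSemiring R] [DecidableEq σ]

/-- The restriction of a polynomial to the line through `y` in the direction of the `i`-th
coordinate, as a polynomial in that coordinate. -/
noncomputable def lineRestriction (y : σ → R) (i : σ) : MvPolynomial σ R →ₐ[R] R[X] :=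
  aeval (Function.update (fun j => Polynomial.C (y j)) i Polynomial.X)

theorem eval_lineRestriction (y : σ → R) (i : σ) (h : MvPolynomial σ R) (t : R) :
    (lineRestriction y i h).eval t = eval (Function.update y i t) h := by
  induction h using MvPolynomial.induction_on with
  | C a => simp [lineRestriction]
  | add p q hp hq => simp [hp, hq]
  | mul_X p j hp =>
    rw [map_mul, Polynomial.eval_mul, hp, map_mul, eval_X]
    obtain rfl | hj := eq_or_ne j i <;> simp [lineRestriction, *]

theorem lineRestriction_ne_zero {y : σ → R} {i : σ} {h : MvPolynomial σ R} {t : R}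
    (ht : eval (Function.update y i t) h ≠ 0) : lineRestriction y i h ≠ 0 :=
  fun h0 => ht (by rw [← eval_lineRestriction, h0, Polynomial.eval_zero])

theorem natDegree_lineRestriction_le (y : σ → R) (i : σ) (h : MvPolynomial σ R) :
    (lineRestriction y i h).natDegree ≤ h.totalDegree := by
  simpa [lineRestriction] using aeval_natDegree_le h le_rfl _ (n := 1) fun j => by
    obtain rfl | hj := eq_or_ne j i
    · simpa using Polynomial.natDegree_X_le
    · simp [hj]

end LineRestriction

section RootPersistence

theorem eventually_nhdsNE_polynomial_eval_ne_zero {R : Type*} [CommRing R] [IsDomain R]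
    [TopologicalSpace R] [T1Space R] {p : R[X]} (hp : p ≠ 0) (z : R) :
    ∀ᶠ t in 𝓝[≠] z, p.eval t ≠ 0 :=
  nhdsNE_le_cofinite z (Polynomial.finite_setOfPred_isRoot hp).eventually_cofinite_notMem

theorem norm_eval_le_of_forall_le_dist_root {K : Type*} [NormedField K] [IsAlgClosed K] {p : K[X]}
    {t₀ t : K} (h : ∀ α ∈ p.roots, dist t t₀ ≤ dist t₀ α) :
    ‖p.eval t‖ ≤ 2 ^ p.natDegree * ‖p.eval t₀‖ := by
  have hsplit := IsAlgClosed.splits p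
  have norm_eval (s : K) :
      ‖p.eval s‖ = ‖p.leadingCoeff‖ * (p.roots.map fun α => dist s α).prod := by
    rw [hsplit.eval_eq_prod_roots, norm_mul]
    congr 1
    simpa [Function.comp_def, dist_eq_norm] using
      map_multiset_prod (normHom : K →*₀ ℝ) (p.roots.map fun α => s - α)
  have hprod : (p.roots.map fun α => dist t α).prod ≤
      (p.roots.map fun α => 2 * dist t₀ α).prod :=
    Multiset.prod_map_le_prod_map₀ _ _ (fun _ _ => dist_nonneg) fun α hα => by
      linarith [dist_triangle t t₀ α, h α hα]
  rw [Multiset.prod_map_mul, Multiset.map_const', Multiset.prod_replicate,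
    ← hsplit.natDegree_eq_card_roots] at hprod
  calc ‖p.eval t‖
      ≤ ‖p.leadingCoeff‖ * (2 ^ p.natDegree * (p.roots.map fun α => dist t₀ α).prod) := by
        rw [norm_eval]; gcongr
    _ = 2 ^ p.natDegree * ‖p.eval t₀‖ := by rw [norm_eval]; ring

variable {K σ : Type*} [NontriviallyNormedField K] [IsAlgClosed K]

-- If `h` had no root within `r` of `y i` on the line through `x`, its values at `y i` and at a
-- point `t` of that disc with `h ≠ 0` over `y` would be comparable, uniformly in `x`.
theorem eventually_exists_mem_ball_eval_update_eq_zero [DecidableEq σ] {h : MvPolynomial σ K}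
    {y : σ → K} (hy : eval y h = 0) {i : σ} {t₁ : K} (ht₁ : eval (Function.update y i t₁) h ≠ 0)
    {r : ℝ} (hr : 0 < r) :
    ∀ᶠ x in 𝓝 y, ∃ z ∈ ball (y i) r, eval (Function.update x i z) h = 0 := by
  obtain ⟨t, ht, htr⟩ : ∃ t, eval (Function.update y i t) h ≠ 0 ∧ t ∈ ball (y i) r := by
    simp_rw [← eval_lineRestriction]
    exact ((eventually_nhdsNE_polynomial_eval_ne_zero (lineRestriction_ne_zero ht₁) (y i)).and
      (nhdsWithin_le_nhds (ball_mem_nhds _ hr))).exists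
  have hcont (s : K) : Continuous fun x : σ → K => ‖eval (Function.update x i s) h‖ := by
    have := h.continuous_eval
    fun_prop
  have hlt : 2 ^ h.totalDegree * ‖eval (Function.update y i (y i)) h‖ <
      ‖eval (Function.update y i t) h‖ := by
    simpa [hy] using ht
  filter_upwards [((hcont (y i)).const_mul _).continuousAt.eventually_lt (hcont t).continuousAt hlt]
    with x hx
  by_contra! hroot
  refine hx.not_ge ?_
  simp_rw [← eval_lineRestriction] at hroot ⊢
  have hfar (α) (hα : α ∈ (lineRestriction x i h).roots) : dist t (y i) ≤ dist (y i) α := by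
    rw [dist_comm _ α]
    exact (mem_ball.1 htr).le.trans
      (not_lt.1 fun hαr => hroot α hαr (Polynomial.isRoot_of_mem_roots hα))
  refine (norm_eval_le_of_forall_le_dist_root hfar).trans ?_
  gcongr
  · exact one_le_two
  · exact natDegree_lineRestriction_le x i h

variable [Finite σ] {P Q : MvPolynomial σ K} {V : Set (σ → K)}

theorem eval_update_eq_zero_of_isRelPrime [DecidableEq σ] (hPQ : IsRelPrime P Q) (hV : IsOpen V)
    (hzero : ∀ y ∈ V, eval y Q = 0 → eval y P = 0) {y : σ → K} (hyV : y ∈ V) (hy : eval y Q = 0)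
    (i : σ) (t : K) : eval (Function.update y i t) Q = 0 := by
  by_contra ht
  obtain ⟨a, b, ρ, hρ, hab⟩ := exists_mul_add_mul_eq_rename_of_isRelPrime hPQ i
  have hmem : ∀ᶠ p : (σ → K) × K in 𝓝 y ×ˢ 𝓝 (y i), Function.update p.1 i p.2 ∈ V := by
    have hcont : Continuous fun p : (σ → K) × K => Function.update p.1 i p.2 := by fun_prop
    rw [← nhds_prod_eq]
    exact hcont.continuousAt.eventually (by simpa using hV.mem_nhds hyV)
  obtain ⟨p, hp, q, hq, hpq⟩ := Filter.eventually_prod_iff.1 hmem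
  obtain ⟨r, hr, hball⟩ := Metric.mem_nhds_iff.1 hq
  have hvanish : ∀ᶠ x in 𝓝 y, eval x (rename Subtype.val ρ) = 0 := by
    filter_upwards [hp, eventually_exists_mem_ball_eval_update_eq_zero hy ht hr]
      with x hx ⟨z, hz, hQz⟩
    have hPz := hzero _ (hpq hx (hball hz)) hQz
    have hval : Function.update x i z ∘ Subtype.val = (x ∘ Subtype.val : {j // j ≠ i} → K) :=
      funext fun j => Function.update_of_ne j.2 _ _
    rw [eval_rename, ← hval, ← eval_rename, ← hab]
    simp [hPz, hQz]
  obtain ⟨W, hW, hWo, hyW⟩ := mem_nhds_iff.1 hvanish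
  have hrename := isZariskiDense_of_isOpen hWo ⟨y, hyW⟩ _ hW
  exact hρ (rename_injective _ Subtype.val_injective (by simpa using hrename))

theorem eval_ne_zero_of_isRelPrime (hPQ : IsRelPrime P Q) (hV : IsOpen V)
    (hzero : ∀ y ∈ V, eval y Q = 0 → eval y P = 0) {x : σ → K} (hx : x ∈ V) : eval x Q ≠ 0 := by
  classical
  cases nonempty_fintype σ
  intro hxQ
  obtain ⟨ε, hε, hball⟩ := Metric.isOpen_iff.1 hV x hx
  have hQ : Q = 0 := by
    refine isZariskiDense_of_isOpen isOpen_ball ⟨x, mem_ball_self hε⟩ _ fun w hw => ?_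
    have hmem (S : Finset σ) : S.piecewise w x ∈ V := hball <| by
      rw [ball_pi _ hε] at hw ⊢
      exact fun j _ => S.piecewise_cases w x (· ∈ ball (x j) ε) (hw j trivial) (mem_ball_self hε)
    have hpiecewise (S : Finset σ) : eval (S.piecewise w x) Q = 0 := by
      induction S using Finset.induction_on with
      | empty => simpa using hxQ
      | insert i S _ ih =>
        rw [Finset.piecewise_insert]
        exact eval_update_eq_zero_of_isRelPrime hPQ hV hzero (hmem S) ih i (w i)
    simpa using hpiecewise Finset.univ
  subst hQ
  exact ((isRelPrime_zero_right.1 hPQ).map (eval x)).ne_zero (hzero x hx hxQ)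

end RootPersistence

section SeparatelyContinuous

/-- Continuity at each point of `U` in each coordinate separately. -/
def SeparatelyContinuousOn {X Y σ : Type*} [TopologicalSpace X] [TopologicalSpace Y] [DecidableEq σ]
    (f : (σ → X) → Y) (U : Set (σ → X)) : Prop :=
  ∀ i, ∀ a ∈ U, ContinuousAt (fun z => f (Function.update a i z)) (a i)

namespace SeparatelyContinuousOn

variable {K σ : Type*} [NontriviallyNormedField K] [DecidableEq σ] {f : (σ → K) → K}
  {U : Set (σ → K)}

theorem eval_mul_sub_eval (hf : SeparatelyContinuousOn f U) (P Q : MvPolynomial σ K) :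
    SeparatelyContinuousOn (fun y => eval y Q * f y - eval y P) U := by
  intro i a ha
  have hcont (h : MvPolynomial σ K) : Continuous fun z => eval (Function.update a i z) h := by
    have := h.continuous_eval
    fun_prop
  exact ((hcont Q).continuousAt.mul (hf i a ha)).sub (hcont P).continuousAt

theorem eq_zero_of_eqOn_compl (hf : SeparatelyContinuousOn f U) (hU : IsOpen U)
    {h : MvPolynomial σ K} (hfh : ∀ y ∈ U, eval y h ≠ 0 → f y = 0) (S : Finset σ) {w y : σ → K}
    (hw : eval w h ≠ 0) (hy : y ∈ U) (hwy : Set.EqOn w y (S : Set σ)ᶜ) : f y = 0 := by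
  induction S using Finset.induction_on generalizing w y with
  | empty =>
    obtain rfl : w = y := by simpa using hwy
    exact hfh w hy hw
  | insert i S _ ih =>
    have hline : lineRestriction w i h ≠ 0 :=
      lineRestriction_ne_zero (t := w i) (by rwa [Function.update_eq_self])
    have hmem : ∀ᶠ t in 𝓝 (y i), Function.update y i t ∈ U := by
      have hcont : Continuous (Function.update y i) := by fun_prop
      exact hcont.continuousAt.eventually (by simpa using hU.mem_nhds hy)
    have hpunctured : (fun t => f (Function.update y i t)) =ᶠ[𝓝[≠] y i] fun _ => 0 := by
      filter_upwards [eventually_nhdsNE_polynomial_eval_ne_zero hline (y i),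
        nhdsWithin_le_nhds hmem] with t ht htU
      refine ih (w := Function.update w i t) (by rwa [← eval_lineRestriction]) htU fun j hj => ?_
      obtain rfl | hji := eq_or_ne j i
      · simp
      · simpa [hji] using hwy (show j ∉ (insert i S : Finset σ) by simpa [hji] using hj)
    simpa using ((hf i y hy).eventuallyEq_nhds_iff_eventuallyEq_nhdsNE
      continuousAt_const).1 hpunctured |>.eq_of_nhds

theorem eq_zero_of_eval_mul_eq_zero [Finite σ] (hf : SeparatelyContinuousOn f U) (hU : IsOpen U)
    {h : MvPolynomial σ K} (hh : h ≠ 0) (hfh : ∀ y ∈ U, eval y h * f y = 0) {y : σ → K}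
    (hy : y ∈ U) : f y = 0 := by
  cases nonempty_fintype σ
  obtain ⟨w, hw⟩ : ∃ w, eval w h ≠ 0 := by
    by_contra! h0
    exact hh (isZariskiDense_of_isOpen isOpen_univ Set.univ_nonempty h fun x _ => h0 x)
  exact hf.eq_zero_of_eqOn_compl hU (fun x hx => (mul_eq_zero.1 (hfh x hx)).resolve_left)
    Finset.univ hw hy (by simp)

end SeparatelyContinuousOn

end SeparatelyContinuous

section Fractions

/-- `f` is given on all of `V` by a single fraction of polynomials, whose denominator has no zero
on `V`. -/
def IsFractionOn {K σ : Type*} [Field K] (f : (σ → K) → K) (V : Set (σ → K)) : Prop :=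
  ∃ P Q : MvPolynomial σ K, ∀ y ∈ V, eval y Q ≠ 0 ∧ f y = eval y P / eval y Q

theorem IsFractionOn.mono {K σ : Type*} [Field K] {f : (σ → K) → K} {V W : Set (σ → K)}
    (hf : IsFractionOn f W) (hVW : V ⊆ W) : IsFractionOn f V :=
  let ⟨P, Q, hPQ⟩ := hf
  ⟨P, Q, fun y hy => hPQ y (hVW hy)⟩

theorem IsFractionOn.exists_isRelPrime {K σ : Type*} [Field K] {f : (σ → K) → K} {V : Set (σ → K)}
    (hf : IsFractionOn f V) (hne : V.Nonempty) :
    ∃ P Q : MvPolynomial σ K, IsRelPrime P Q ∧ ∀ y ∈ V, eval y Q * f y = eval y P := by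
  obtain ⟨P, Q, hPQ⟩ := hf
  obtain ⟨x, hx⟩ := hne
  have hQ : Q ≠ 0 := fun h0 => (hPQ x hx).1 (by rw [h0, map_zero])
  obtain ⟨P', Q', g, hrel, rfl, rfl⟩ := UniqueFactorizationMonoid.exists_reduced_factors' P Q hQ
  refine ⟨P', Q', hrel, fun y hy => ?_⟩
  obtain ⟨hQy, hfy⟩ := hPQ y hy
  rw [map_mul] at hQy
  rw [hfy, map_mul, map_mul, mul_div_mul_left _ _ (left_ne_zero_of_mul hQy),
    mul_div_cancel₀ _ (right_ne_zero_of_mul hQy)]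

variable {K σ : Type*} [NontriviallyNormedField K] [IsAlgClosed K] [Finite σ] {f : (σ → K) → K}
  {U : Set (σ → K)} {P Q : MvPolynomial σ K}

theorem isFractionOn_of_isRelPrime (hU : IsOpen U) (hPQ : IsRelPrime P Q)
    (hf : ∀ y ∈ U, eval y Q * f y = eval y P) : IsFractionOn f U := by
  refine ⟨P, Q, fun y hy => ?_⟩
  have hQy : eval y Q ≠ 0 :=
    eval_ne_zero_of_isRelPrime hPQ hU (fun x hx hQx => by rw [← hf x hx, hQx, zero_mul]) hy
  exact ⟨hQy, by rw [eq_div_iff hQy, mul_comm, hf y hy]⟩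

theorem SeparatelyContinuousOn.isFractionOn_of_eval_mul_eq [DecidableEq σ]
    (hf : SeparatelyContinuousOn f U) (hU : IsOpen U) (hQ : Q ≠ 0)
    (hPQ : ∀ y ∈ U, eval y Q * f y = eval y P) : IsFractionOn f U := by
  obtain ⟨P', Q', g, hrel, rfl, rfl⟩ := UniqueFactorizationMonoid.exists_reduced_factors' P Q hQ
  refine isFractionOn_of_isRelPrime hU hrel fun y hy => sub_eq_zero.1 ?_
  refine (hf.eval_mul_sub_eval P' Q').eq_zero_of_eval_mul_eq_zero hU (left_ne_zero_of_mul hQ)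
    (fun x hx => ?_) hy
  have hx := hPQ x hx
  rw [map_mul, map_mul] at hx
  linear_combination hx

theorem isFractionOn_of_isPreconnected (hU : IsPreconnected U)
    (hf : ∀ x ∈ U, ∃ V ∈ 𝓝 x, IsFractionOn f V) : IsFractionOn f U := by
  obtain rfl | ⟨x₀, hx₀⟩ := U.eq_empty_or_nonempty
  · exact ⟨0, 0, fun y hy => hy.elim⟩
  obtain ⟨V₀, hV₀, hfV₀⟩ := hf x₀ hx₀
  obtain ⟨P₀, Q₀, hrel, hPQ₀⟩ := hfV₀.exists_isRelPrime ⟨x₀, mem_of_mem_nhds hV₀⟩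
  let S : Set (σ → K) := {y | eval y Q₀ * f y = eval y P₀}
  have hS {y} (hy : y ∈ interior S) : eval y Q₀ * f y = eval y P₀ :=
    (interior_subset hy : y ∈ S)
  have hUS : U ⊆ interior S := by
    refine hU.subset_of_closure_inter_subset isOpen_interior
      ⟨x₀, hx₀, mem_interior_iff_mem_nhds.2 (Filter.mem_of_superset hV₀ hPQ₀)⟩ ?_
    rintro x ⟨hxS, hxU⟩
    obtain ⟨V, hV, P, Q, hPQ⟩ := hf x hxU
    have hcross : Q₀ * P - P₀ * Q = 0 := by
      obtain ⟨y, hyV, hyS⟩ := mem_closure_iff_nhds.1 hxS _ (interior_mem_nhds.2 hV)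
      refine isZariskiDense_of_isOpen (isOpen_interior.inter isOpen_interior) ⟨y, hyV, hyS⟩ _
        fun z hz => ?_
      obtain ⟨hQz, hfz⟩ := hPQ z (interior_subset hz.1)
      rw [map_sub, map_mul, map_mul, ← hS hz.2, hfz, mul_assoc, div_mul_cancel₀ _ hQz, sub_self]
    refine mem_interior_iff_mem_nhds.2 (Filter.mem_of_superset hV fun z hz => ?_)
    obtain ⟨hQz, hfz⟩ := hPQ z hz
    have hcross_z : eval z Q₀ * eval z P = eval z P₀ * eval z Q := by
      simpa [sub_eq_zero] using congrArg (eval z) hcross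
    change eval z Q₀ * f z = eval z P₀
    rw [hfz, ← mul_div_assoc, hcross_z, mul_div_cancel_right₀ _ hQz]
  exact (isFractionOn_of_isRelPrime isOpen_interior hrel fun _ => hS).mono hUS

end Fractions

section RegularSlices

/-- Regularity of a function of one variable on `A`: near each point of `A` there is a fraction of
polynomials which agrees with `g` on `A` away from the zeros of its denominator. -/
def IsRegularOn {K : Type*} [Field K] (g : K → K) (A : Set K) : Prop :=
  ∀ z₀ ∈ A, ∃ p q : K[X], q.eval z₀ ≠ 0 ∧ ∀ z ∈ A, q.eval z ≠ 0 → g z = p.eval z / q.eval z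

variable {K σ : Type*} [NontriviallyNormedField K] {A : Set K}

theorem IsRegularOn.continuousAt {g : K → K} (hg : IsRegularOn g A) (hA : IsOpen A) {z : K}
    (hz : z ∈ A) : ContinuousAt g z := by
  obtain ⟨p, q, hq, hpq⟩ := hg z hz
  refine (p.continuousAt.div q.continuousAt hq).congr ?_
  filter_upwards [hA.mem_nhds hz, q.continuousAt.eventually_ne hq] with t ht hqt
  exact (hpq t ht hqt).symm

theorem IsRegularOn.exists_eval_mul_eq {g : K → K} (hg : IsRegularOn g A) (hA : IsOpen A)
    (hne : A.Nonempty) : ∃ p q : K[X], q ≠ 0 ∧ ∀ z ∈ A, q.eval z * g z = p.eval z := by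
  obtain ⟨z₀, hz₀⟩ := hne
  obtain ⟨p, q, hq, hpq⟩ := hg z₀ hz₀
  have hq0 : q ≠ 0 := fun h0 => hq (by rw [h0, Polynomial.eval_zero])
  refine ⟨p, q, hq0, fun z hz => ?_⟩
  have hpunctured : (fun t => q.eval t * g t) =ᶠ[𝓝[≠] z] fun t => p.eval t := by
    filter_upwards [eventually_nhdsNE_polynomial_eval_ne_zero hq0 z,
      nhdsWithin_le_nhds (hA.mem_nhds hz)] with t hqt ht
    rw [hpq t ht hqt, mul_div_cancel₀ _ hqt]
  exact ((q.continuousAt.mul (hg.continuousAt hA hz)).eventuallyEq_nhds_iff_eventuallyEq_nhdsNE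
    p.continuousAt).1 hpunctured |>.eq_of_nhds

variable [CompleteSpace K]

theorem exists_isZariskiDense_natDegree_lt [Finite σ] {V : Set (σ → K)} (hV : IsOpen V)
    (hVne : V.Nonempty) {F : K → (σ → K) → K}
    (hF : ∀ s ∈ V, ∃ p q : K[X], q ≠ 0 ∧ ∀ t ∈ A, q.eval t * F t s = p.eval t) :
    ∃ d, IsZariskiDense {s ∈ V | ∃ p q : K[X], q ≠ 0 ∧ p.natDegree < d ∧ q.natDegree < d ∧
      ∀ t ∈ A, q.eval t * F t s = p.eval t} := by
  refine exists_isZariskiDense_of_subset_iUnion hV hVne fun s hs => Set.mem_iUnion.2 ?_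
  obtain ⟨p, q, hq, hpq⟩ := hF s hs
  exact ⟨max p.natDegree q.natDegree + 1, hs, p, q, hq, by omega, by omega, hpq⟩

theorem exists_eval_eval_C_mul_eq_of_slices [Finite σ] (hA : A.Infinite) {V : Set (σ → K)}
    (hV : IsOpen V) (hVne : V.Nonempty) {F : K → (σ → K) → K} (hfst : ∀ t ∈ A, IsFractionOn (F t) V)
    (hsnd : ∀ s ∈ V, ∃ p q : K[X], q ≠ 0 ∧ ∀ t ∈ A, q.eval t * F t s = p.eval t) :
    ∃ p q : (MvPolynomial σ K)[X], q ≠ 0 ∧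
      ∀ t ∈ A, ∀ s ∈ V, eval s (q.eval (C t)) * F t s = eval s (p.eval (C t)) := by
  obtain ⟨d, hdense⟩ := exists_isZariskiDense_natDegree_lt hV hVne hsnd
  choose a b hab using fun t : A => hfst t t.2
  obtain ⟨p, q, hne, hpq⟩ := hdense.exists_eval_C_mul_eq (d := d) (x := ((↑) : A → K))
      (a := a) (b := b) fun s ⟨hs, p, q, hq, hpd, hqd, hpq⟩ => by
    refine ⟨p, q, hq, hpd, hqd, fun t => ?_⟩
    obtain ⟨hbs, hFs⟩ := hab t s hs
    rw [← hpq t t.2, hFs, mul_assoc, div_mul_cancel₀ _ hbs]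
  have hb (t : A) : b t ≠ 0 := by
    obtain ⟨s, hs⟩ := hVne
    exact fun h0 => (hab t s hs).1 (by rw [h0, map_zero])
  have := hA.to_subtype
  refine ⟨p, q, ne_zero_of_forall_eval_mul_eq_eval_mul
    ((C_injective σ K).comp Subtype.val_injective) hb hne hpq, fun t ht s hs => ?_⟩
  obtain ⟨hbs, hFs⟩ := hab ⟨t, ht⟩ s hs
  rw [hFs, ← mul_div_assoc, ← map_mul, hpq ⟨t, ht⟩, map_mul, mul_div_cancel_right₀ _ hbs]

theorem eval_cons_finSuccEquiv_symm {R : Type*} [CommSemiring R] {n : ℕ} (t : R) (s : Fin n → R)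
    (p : (MvPolynomial (Fin n) R)[X]) :
    eval (Fin.cons t s : Fin (n + 1) → R) ((finSuccEquiv R n).symm p) = eval s (p.eval (C t)) := by
  rw [eval_eq_eval_mv_eval', AlgEquiv.apply_symm_apply, ← Polynomial.eval_map_apply, eval_C]

theorem isFractionOn_pi_of_isRegularOn_slices [IsAlgClosed K] {n : ℕ} {A : Fin n → Set K}
    (hA : ∀ i, IsOpen (A i)) (hne : ∀ i, (A i).Nonempty) {f : (Fin n → K) → K}
    (hf : ∀ i, ∀ a ∈ Set.univ.pi A, IsRegularOn (fun z => f (Function.update a i z)) (A i)) :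
    IsFractionOn f (Set.univ.pi A) := by
  induction n with
  | zero =>
    refine ⟨C (f default), 1, fun y _ => ?_⟩
    simp [Subsingleton.elim y default]
  | succ n ih =>
    have hcons {t : K} {s : Fin n → K} :
        (Fin.cons t s : Fin (n + 1) → K) ∈ Set.univ.pi A ↔
          t ∈ A 0 ∧ s ∈ Set.univ.pi fun j => A j.succ := by
      simp [Fin.forall_fin_succ]
    have hfst (t) (ht : t ∈ A 0) :
        IsFractionOn (fun s => f (Fin.cons t s)) (Set.univ.pi fun j => A j.succ) := by
      refine ih (fun j => hA j.succ) (fun j => hne j.succ) fun i s hs => ?_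
      simpa only [Fin.cons_update] using hf i.succ _ (hcons.2 ⟨ht, hs⟩)
    obtain ⟨t₀, ht₀⟩ := hne 0
    obtain ⟨p, q, hq, hpq⟩ := exists_eval_eval_C_mul_eq_of_slices
      (infinite_of_mem_nhds t₀ ((hA 0).mem_nhds ht₀))
      (isOpen_set_pi Set.finite_univ fun (j : Fin n) _ => hA j.succ)
      (Set.univ_pi_nonempty_iff.2 fun (j : Fin n) => hne j.succ) hfst fun s hs => by
        simpa only [Fin.update_cons_zero] using
          (hf 0 _ (hcons.2 ⟨ht₀, hs⟩)).exists_eval_mul_eq (hA 0) (hne 0)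
    have hcont : SeparatelyContinuousOn f (Set.univ.pi A) := fun i a ha =>
      (hf i a ha).continuousAt (hA i) (ha i trivial)
    refine hcont.isFractionOn_of_eval_mul_eq (isOpen_set_pi Set.finite_univ fun i _ => hA i)
      (P := (finSuccEquiv K n).symm p) (Q := (finSuccEquiv K n).symm q) (by simpa using hq)
      fun y hy => ?_
    rw [← Fin.cons_self_tail y] at hy ⊢
    simpa only [eval_cons_finSuccEquiv_symm] using hpq _ (hcons.1 hy).1 _ (hcons.1 hy).2

end RegularSlices

theorem regular_of_separately_regular_on_arcs_complex_general {K : Type*}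
    [NontriviallyNormedField K] [CompleteSpace K] [IsAlgClosed K] {n : ℕ} {U : Set (Fin n → K)}
    (hU : IsOpen U) (hconn : IsPreconnected U) {f : (Fin n → K) → K}
    (hdisc : ∀ i, ∀ a ∈ U, ∀ c r, 0 < r → ball c r ⊆ {z | Function.update a i z ∈ U} →
      IsRegularOn (fun z => f (Function.update a i z)) (ball c r)) :
    IsFractionOn f U := by
  refine isFractionOn_of_isPreconnected hconn fun x hx => ?_
  obtain ⟨r, hr, hball⟩ := Metric.isOpen_iff.1 hU x hx
  refine ⟨ball x r, ball_mem_nhds x hr, ?_⟩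
  rw [ball_pi x hr] at hball ⊢
  refine isFractionOn_pi_of_isRegularOn_slices (fun i => isOpen_ball) (fun i => nonempty_ball.2 hr)
    fun i a ha => hdisc i a (hball ha) _ r hr fun z hz => hball ?_
  exact (Set.update_mem_pi_iff_of_mem ha).2 fun _ => hz

/-- **Theorem 9.2** (case where every factor is the affine line). Let `U ⊆ ℂⁿ` be a
nonempty connected open set and `f : U → ℂ` a function. If for every coordinate
direction `i`, every `a ∈ U`, and every connected open set `A` homeomorphic to the open
unit disc contained in `{z : a(i↦z) ∈ U}`, the function `z ↦ f (a(i↦z))` is regular on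
`A`, then `f` is regular on `U`. -/
theorem regular_of_separately_regular_on_arcs_complex
    (n : ℕ) (U : Set (Fin n → ℂ)) (hU : IsOpen U) (hne : U.Nonempty)
    (hconn : IsConnected U) (f : (Fin n → ℂ) → ℂ)
    (harc : ∀ (i : Fin n) (a : Fin n → ℂ), a ∈ U →
      ∀ A : Set ℂ, A ⊆ {z : ℂ | Function.update a i z ∈ U} → IsOpen A → IsConnected A →
        Nonempty (A ≃ₜ (Metric.ball (0 : ℂ) 1)) →
        ∀ z₀ ∈ A, ∃ p q : Polynomial ℂ, q.eval z₀ ≠ 0 ∧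
          ∀ z ∈ A, q.eval z ≠ 0 → f (Function.update a i z) = p.eval z / q.eval z) :
    ∀ x ∈ U, ∃ p q : MvPolynomial (Fin n) ℂ, eval x q ≠ 0 ∧
      ∀ y ∈ U, eval y q ≠ 0 → f y = eval y p / eval y q := by
  obtain ⟨p, q, hpq⟩ := regular_of_separately_regular_on_arcs_complex_general hU
    hconn.isPreconnected fun i a ha c r hr hcr =>
      harc i a ha _ hcr isOpen_ball (isConnected_ball hr)
        ⟨(OpenPartialHomeomorph.unitBallBall c r hr).toHomeomorphSourceTarget.symm⟩
  exact fun x hx => ⟨p, q, (hpq x hx).1, fun y hy _ => (hpq y hy).2⟩
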